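/- Let K be a set of density matrices on ℂ^d that admits a preparation-and-measurement noncontextual model. Let σ_* ∈ K and, for i ∈ {1,2}, let σ_{i+}, σ_{i−}, σ_{i0} ∈ cone(K) satisfy σ_{1+} + σ_{1−} + σ_{10} = σ_* = σ_{2+} + σ_{2−} + σ_{20}. Let A₁, A₂ be Hermitian d×d matrices with −I ≤ A_i ≤ I. Then Tr[(A₁ + A₂)(σ_{1+} − σ_{1−})] + Tr[(A₁ − A₂)(σ_{2+} − σ_{2−})] ≤ 2. -/

import Mathlib

open Matrix
open scoped Kronecker ComplexOrder BigOperators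

noncomputable section

/-- A density matrix: positive semidefinite with trace 1. -/
def IsDensity {d : Type*} [Fintype d] [DecidableEq d] (ρ : Matrix d d ℂ) : Prop :=
  ρ.PosSemidef ∧ ρ.trace = 1

/-- Partial trace over the second (B) factor. -/
def trB {m n : ℕ} (ρ : Matrix (Fin m × Fin n) (Fin m × Fin n) ℂ) :
    Matrix (Fin m) (Fin m) ℂ := fun i j => ∑ k, ρ (i, k) (j, k)

/-- Partial trace over the first (A) factor. -/
def trA {m n : ℕ} (ρ : Matrix (Fin m × Fin n) (Fin m × Fin n) ℂ) :
    Matrix (Fin n) (Fin n) ℂ := fun k l => ∑ i, ρ (i, k) (i, l)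

/-- The set of states remotely preparable on Alice's side. -/
def LambdaA {m n : ℕ} (ρ : Matrix (Fin m × Fin n) (Fin m × Fin n) ℂ) :
    Set (Matrix (Fin m) (Fin m) ℂ) :=
  {σ | IsDensity σ ∧ ∃ E : Matrix (Fin n) (Fin n) ℂ, E.PosSemidef ∧
    σ = trB (((1 : Matrix (Fin m) (Fin m) ℂ) ⊗ₖ E) * ρ)}

/-- The set of states remotely preparable on Bob's side. -/
def LambdaB {m n : ℕ} (ρ : Matrix (Fin m × Fin n) (Fin m × Fin n) ℂ) :
    Set (Matrix (Fin n) (Fin n) ℂ) :=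
  {σ | IsDensity σ ∧ ∃ E : Matrix (Fin m) (Fin m) ℂ, E.PosSemidef ∧
    σ = trA ((E ⊗ₖ (1 : Matrix (Fin n) (Fin n) ℂ)) * ρ)}

/-- A preparation-and-measurement noncontextual model for a set `K` of density matrices. -/
def HasNCModel {d : ℕ} (K : Set (Matrix (Fin d) (Fin d) ℂ)) : Prop :=
  ∃ (L : ℕ) (N ω : Fin L → Matrix (Fin d) (Fin d) ℂ),
    (∀ l, (N l).IsHermitian) ∧ (∀ l, IsDensity (ω l)) ∧
    (∀ ρ ∈ K, ∀ l, 0 ≤ (ρ * N l).trace) ∧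
    (∀ ρ ∈ K, ∑ l, (ρ * N l).trace = 1) ∧
    (∀ ρ ∈ K, ∀ M : Matrix (Fin d) (Fin d) ℂ, M.PosSemidef → (1 - M).PosSemidef →
      (ρ * M).trace = ∑ l, (ρ * N l).trace * (ω l * M).trace)

/-- Separability of a bipartite density matrix. -/
def Separable {m n : ℕ} (ρ : Matrix (Fin m × Fin n) (Fin m × Fin n) ℂ) : Prop :=
  ∃ (L : ℕ) (ω : Fin L → Matrix (Fin m) (Fin m) ℂ)
    (κ : Fin L → Matrix (Fin n) (Fin n) ℂ),
    (∀ l, IsDensity (ω l)) ∧ (∀ l, (κ l).PosSemidef) ∧ ρ = ∑ l, ω l ⊗ₖ κ l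

/-- The cone generated by a set of density matrices: nonnegative real multiples. -/
def coneOf {d : ℕ} (K : Set (Matrix (Fin d) (Fin d) ℂ)) : Set (Matrix (Fin d) (Fin d) ℂ) :=
  {x | ∃ (μ : ℝ) (σ : Matrix (Fin d) (Fin d) ℂ), 0 ≤ μ ∧ σ ∈ K ∧ x = (μ : ℂ) • σ}

/-!
Effects `0 ≤ M ≤ 1` span the full matrix algebra, so a noncontextual model determines more than
statistics: it writes each `ρ ∈ K` as `∑ l, p l ρ • ω l`, with linear functionals `p l` that are
nonnegative on the cone over `K` and sum to `1` on `K`. The CHSH expression therefore splits over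
the hidden variable `l`. In each term the observables contribute numbers in `[-1, 1]` and the two
assemblages contribute numbers in `[-p l σ, p l σ]`, where `σ` is their common sum. This is the
setting of the classical CHSH bound, which gives `2 * p l σ`; summing over `l` gives `2`.
-/

section ScalarBounds

variable {R : Type*}

theorem sub_mem_Icc_neg_of_nonneg [AddCommGroup R] [PartialOrder R] [IsOrderedAddMonoid R]
    {x y z : R} (hx : 0 ≤ x) (hy : 0 ≤ y) (hz : 0 ≤ z) :
    x - y ∈ Set.Icc (-(x + y + z)) (x + y + z) := by
  constructor
  · calc -(x + y + z) ≤ -y :=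
          neg_le_neg (le_add_of_le_of_nonneg (le_add_of_nonneg_left hx) hz)
      _ ≤ x - y := neg_le_sub_iff_le_add.mpr (le_add_of_nonneg_left hx)
  · calc x - y ≤ x := sub_le_self x hy
      _ ≤ x + y + z := le_add_of_le_of_nonneg (le_add_of_nonneg_right hy) hz

/- The order of `ℂ` is only partial, so no case split on signs is available. Instead, the slack is
affine in `a` and in `b`, hence a nonnegative combination of its values at the corners
`a, b = ±1`. -/
theorem classical_chsh_le [CommRing R] [PartialOrder R] [IsStrictOrderedRing R]
    [PosMulReflectLE R] {a b x y s : R} (ha : a ∈ Set.Icc (-1) 1) (hb : b ∈ Set.Icc (-1) 1)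
    (hx : x ∈ Set.Icc (-s) s) (hy : y ∈ Set.Icc (-s) s) :
    (a + b) * x + (a - b) * y ≤ 2 * s := by
  have one_add_nonneg {c : R} (hc : c ∈ Set.Icc (-1) 1) : 0 ≤ 1 + c :=
    neg_le_iff_add_nonneg'.mp hc.1
  have one_sub_nonneg {c : R} (hc : c ∈ Set.Icc (-1) 1) : 0 ≤ 1 - c := sub_nonneg.mpr hc.2
  have corners : 0 ≤
      (1 + a) * (1 + b) * (s - x) + (1 - a) * (1 - b) * (s + x)
        + (1 + a) * (1 - b) * (s - y) + (1 - a) * (1 + b) * (s + y) := by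
    have := one_add_nonneg ha
    have := one_sub_nonneg ha
    have := one_add_nonneg hb
    have := one_sub_nonneg hb
    have := sub_nonneg.mpr hx.2
    have := neg_le_iff_add_nonneg'.mp hx.1
    have := sub_nonneg.mpr hy.2
    have := neg_le_iff_add_nonneg'.mp hy.1
    positivity
  refine le_of_mul_le_mul_left ?_ (two_pos : (0 : R) < 2)
  linear_combination corners

end ScalarBounds

section TracePairing

variable {n : Type*}

open scoped MatrixOrder in
theorem trace_mul_nonneg_of_posSemidef [Fintype n] {𝕜 : Type*} [RCLike 𝕜] {A B : Matrix n n 𝕜}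
    (hA : A.PosSemidef) (hB : B.PosSemidef) : 0 ≤ (A * B).trace := by
  classical
  obtain ⟨C, rfl⟩ := CStarAlgebra.nonneg_iff_eq_star_mul_self.mp hA.nonneg
  rw [Matrix.star_eq_conjTranspose, Matrix.mul_assoc, Matrix.trace_mul_comm]
  exact (hB.mul_mul_conjTranspose_same C).trace_nonneg

theorem IsDensity.trace_mul_mem_Icc [Fintype n] [DecidableEq n] {ω A : Matrix n n ℂ}
    (hω : IsDensity ω) (hl : (A + 1).PosSemidef) (hu : (1 - A).PosSemidef) :
    (A * ω).trace ∈ Set.Icc (-1) 1 := by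
  have lower := trace_mul_nonneg_of_posSemidef hl hω.1
  have upper := trace_mul_nonneg_of_posSemidef hu hω.1
  rw [Matrix.add_mul, Matrix.one_mul, Matrix.trace_add, hω.2] at lower
  rw [Matrix.sub_mul, Matrix.one_mul, Matrix.trace_sub, hω.2] at upper
  exact ⟨neg_le_iff_add_nonneg.mpr lower, sub_nonneg.mp upper⟩

open scoped MatrixOrder Matrix.Norms.L2Operator in
theorem span_effects_eq_top [Finite n] [DecidableEq n] :
    Submodule.span ℂ {M : Matrix n n ℂ | M.PosSemidef ∧ (1 - M).PosSemidef} = ⊤ := by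
  cases nonempty_fintype n
  rw [eq_top_iff, ← CStarAlgebra.span_nonneg_inter_unitClosedBall (A := Matrix n n ℂ)]
  refine Submodule.span_mono fun M ⟨hM, hM_norm⟩ => ⟨Matrix.nonneg_iff_posSemidef.mp hM, ?_⟩
  exact (CStarAlgebra.norm_le_one_iff_of_nonneg M hM).mp (mem_closedBall_zero_iff.mp hM_norm)

theorem eq_of_forall_effect_trace_mul_eq [Fintype n] [DecidableEq n] {X Y : Matrix n n ℂ}
    (h : ∀ M : Matrix n n ℂ, M.PosSemidef → (1 - M).PosSemidef →
      (X * M).trace = (Y * M).trace) : X = Y := by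
  let pairing (Z : Matrix n n ℂ) : Matrix n n ℂ →ₗ[ℂ] ℂ :=
    Matrix.traceLinearMap n ℂ ℂ ∘ₗ LinearMap.mulLeft ℂ Z
  have hpair : pairing X = pairing Y :=
    LinearMap.ext_on span_effects_eq_top fun M hM => h M hM.1 hM.2
  exact Matrix.ext_iff_trace_mul_right.mpr fun M => LinearMap.congr_fun hpair M

theorem trace_mul_eq_sum_of_eq_sum_smul [Fintype n] {ι R : Type*} [Fintype ι] [CommSemiring R]
    {c : ι → R} {ω : ι → Matrix n n R} {σ : Matrix n n R} (hσ : σ = ∑ i, c i • ω i)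
    (A : Matrix n n R) : (A * σ).trace = ∑ i, (A * ω i).trace * c i := by
  simp only [hσ, Matrix.mul_sum, Matrix.trace_sum, Matrix.mul_smul, Matrix.trace_smul,
    smul_eq_mul, mul_comm]

end TracePairing

section NoncontextualModel

variable {d : ℕ} {K : Set (Matrix (Fin d) (Fin d) ℂ)}

theorem coneOf_subset_span : coneOf K ⊆ Submodule.span ℂ K := by
  rintro _ ⟨μ, σ, _, hσ, rfl⟩
  exact Submodule.smul_mem _ _ (Submodule.subset_span hσ)

theorem map_nonneg_of_mem_coneOf {f : Matrix (Fin d) (Fin d) ℂ →ₗ[ℂ] ℂ}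
    (hf : ∀ ρ ∈ K, 0 ≤ f ρ) {σ : Matrix (Fin d) (Fin d) ℂ} (hσ : σ ∈ coneOf K) : 0 ≤ f σ := by
  obtain ⟨μ, ρ, hμ, hρ, rfl⟩ := hσ
  rw [map_smul, smul_eq_mul]
  exact mul_nonneg (Complex.zero_le_real.mpr hμ) (hf ρ hρ)

theorem map_sub_mem_Icc_of_mem_coneOf {f : Matrix (Fin d) (Fin d) ℂ →ₗ[ℂ] ℂ}
    (hf : ∀ ρ ∈ K, 0 ≤ f ρ) {σp σm σ0 σs : Matrix (Fin d) (Fin d) ℂ}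
    (hp : σp ∈ coneOf K) (hm : σm ∈ coneOf K) (h0 : σ0 ∈ coneOf K) (hsum : σp + σm + σ0 = σs) :
    f (σp - σm) ∈ Set.Icc (-f σs) (f σs) := by
  rw [← hsum, map_sub, map_add, map_add]
  exact sub_mem_Icc_neg_of_nonneg (map_nonneg_of_mem_coneOf hf hp)
    (map_nonneg_of_mem_coneOf hf hm) (map_nonneg_of_mem_coneOf hf h0)

theorem HasNCModel.exists_decomposition (hK : HasNCModel K) :
    ∃ (L : ℕ) (p : Fin L → Matrix (Fin d) (Fin d) ℂ →ₗ[ℂ] ℂ)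
      (ω : Fin L → Matrix (Fin d) (Fin d) ℂ),
      (∀ l, IsDensity (ω l)) ∧ (∀ l, ∀ ρ ∈ K, 0 ≤ p l ρ) ∧ (∀ ρ ∈ K, ∑ l, p l ρ = 1) ∧
      ∀ σ ∈ Submodule.span ℂ K, σ = ∑ l, p l σ • ω l := by
  obtain ⟨L, N, ω, -, hω, hnonneg, hsum, hmodel⟩ := hK
  let p (l : Fin L) : Matrix (Fin d) (Fin d) ℂ →ₗ[ℂ] ℂ :=
    Matrix.traceLinearMap (Fin d) ℂ ℂ ∘ₗ LinearMap.mulRight ℂ (N l)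
  have decomposition_on_K : ∀ ρ ∈ K, ρ = ∑ l, p l ρ • ω l := fun ρ hρ =>
    eq_of_forall_effect_trace_mul_eq fun M hM hM' => by
      rw [hmodel ρ hρ M hM hM', Matrix.sum_mul, Matrix.trace_sum]
      simp only [p, Matrix.smul_mul, Matrix.trace_smul, smul_eq_mul, LinearMap.comp_apply,
        LinearMap.mulRight_apply, Matrix.traceLinearMap_apply]
  refine ⟨L, p, ω, hω, fun l ρ hρ => hnonneg ρ hρ l, hsum, fun σ hσ => ?_⟩
  let reconstruct : Matrix (Fin d) (Fin d) ℂ →ₗ[ℂ] Matrix (Fin d) (Fin d) ℂ :=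
    ∑ l, (p l).smulRight (ω l)
  have reconstruct_apply (τ) : reconstruct τ = ∑ l, p l τ • ω l := by
    simp only [reconstruct, LinearMap.sum_apply, LinearMap.smulRight_apply]
  have fixed_on_K : Set.EqOn (LinearMap.id (R := ℂ)) reconstruct K := fun ρ hρ =>
    (decomposition_on_K ρ hρ).trans (reconstruct_apply ρ).symm
  exact (LinearMap.eqOn_span fixed_on_K hσ).trans (reconstruct_apply σ)

end NoncontextualModel

theorem chsh_noncontextuality_inequality {d : ℕ}
    (K : Set (Matrix (Fin d) (Fin d) ℂ)) (hK : HasNCModel K)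
    (σs : Matrix (Fin d) (Fin d) ℂ) (hσs : σs ∈ K)
    (σ₁p σ₁m σ₁0 σ₂p σ₂m σ₂0 : Matrix (Fin d) (Fin d) ℂ)
    (h₁p : σ₁p ∈ coneOf K) (h₁m : σ₁m ∈ coneOf K) (h₁0 : σ₁0 ∈ coneOf K)
    (h₂p : σ₂p ∈ coneOf K) (h₂m : σ₂m ∈ coneOf K) (h₂0 : σ₂0 ∈ coneOf K)
    (hsum₁ : σ₁p + σ₁m + σ₁0 = σs) (hsum₂ : σ₂p + σ₂m + σ₂0 = σs)
    (A₁ A₂ : Matrix (Fin d) (Fin d) ℂ)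
    (hA₁ : A₁.IsHermitian) (hA₂ : A₂.IsHermitian)
    (hA₁u : (1 - A₁).PosSemidef) (hA₁l : (A₁ + 1).PosSemidef)
    (hA₂u : (1 - A₂).PosSemidef) (hA₂l : (A₂ + 1).PosSemidef) :
    ((A₁ + A₂) * (σ₁p - σ₁m)).trace + ((A₁ - A₂) * (σ₂p - σ₂m)).trace ≤ 2 := by
  obtain ⟨L, p, ω, hω, hp, hone, hdecomp⟩ := hK.exists_decomposition
  have hspan₁ : σ₁p - σ₁m ∈ Submodule.span ℂ K :=
    sub_mem (coneOf_subset_span h₁p) (coneOf_subset_span h₁m)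
  have hspan₂ : σ₂p - σ₂m ∈ Submodule.span ℂ K :=
    sub_mem (coneOf_subset_span h₂p) (coneOf_subset_span h₂m)
  calc ((A₁ + A₂) * (σ₁p - σ₁m)).trace + ((A₁ - A₂) * (σ₂p - σ₂m)).trace
      = ∑ l, (((A₁ * ω l).trace + (A₂ * ω l).trace) * p l (σ₁p - σ₁m)
          + ((A₁ * ω l).trace - (A₂ * ω l).trace) * p l (σ₂p - σ₂m)) := by
        rw [trace_mul_eq_sum_of_eq_sum_smul (hdecomp _ hspan₁),
          trace_mul_eq_sum_of_eq_sum_smul (hdecomp _ hspan₂), ← Finset.sum_add_distrib]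
        simp only [Matrix.add_mul, Matrix.sub_mul, Matrix.trace_add, Matrix.trace_sub]
    _ ≤ ∑ l, 2 * p l σs := Finset.sum_le_sum fun l _ =>
        classical_chsh_le ((hω l).trace_mul_mem_Icc hA₁l hA₁u)
          ((hω l).trace_mul_mem_Icc hA₂l hA₂u)
          (map_sub_mem_Icc_of_mem_coneOf (hp l) h₁p h₁m h₁0 hsum₁)
          (map_sub_mem_Icc_of_mem_coneOf (hp l) h₂p h₂m h₂0 hsum₂)
    _ = 2 := by rw [← Finset.mul_sum, hone σs hσs, mul_one]
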